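/- Assume A* is aperiodic and supercritical. For every word P = p₁p₂⋯p_k in A*, there is an ε_P > 0 such that, with probability at least 1 − 2^{−Ω(n)}, a uniformly random word X ∈ A*_n contains at least ε_P·n pairwise disjoint P-blocks. -/

import Mathlib

/-- The weight of a word: the sum of the weights of its letters. -/
def wt {A : Type*} (w : A → ℕ) (W : List A) : ℕ := (W.map w).sum

/-- `X` contains `m` pairwise disjoint `P`-blocks: there are `m` starting positions,
consecutive ones at distance at least `P.length`, at each of which the `P.length`
consecutive letters of `X` form exactly the word `P`. -/
def HasDisjointBlocks {A : Type*} (P X : List A) (m : ℕ) : Prop :=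
  ∃ g : ℕ → ℕ, (∀ i < m, (X.drop (g i)).take P.length = P) ∧
    ∀ i, i + 1 < m → g i + P.length ≤ g (i + 1)

/-!
Let `A(x) = ∑ a, x ^ w a`, let `A(κ) = 1`, and let `κ < z < x` with `x` close to `κ`.

* There are at least `c * z ^ (-n)` words of weight `n`, as soon as there is one. Indeed the
  weights of words are, from some point on, exactly the multiples of the gcd of the letter weights;
  so one can split off a first letter from a finite set `F` with `1 ≤ ∑ a ∈ F, z ^ w a`, and
  `z ^ n` times the number of words of weight `n` never drops below its least positive value over
  a bounded range of `n`.
* Cut a word into consecutive chunks of length `k = P.length` and a shorter remainder, and let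
  `b X` be the number of chunks of `X` equal to `P`. Penalising these by a factor `1 / 2` turns the
  generating function `∑ X, x ^ wt w X` into a geometric series of ratio
  `A(x) ^ k - x ^ wt w P / 2`, which is less than `1` for `x` close enough to `κ`. Hence
  `∑ X, x ^ wt w X * (1 / 2) ^ b X` converges, so that by Markov's inequality at most
  `C * x ^ (-n) * 2 ^ (ε * n)` words of weight `n` satisfy `b X < ε * n`.

With `x / z = 2 ^ (2 * ε)` the quotient of the two bounds is a multiple of `2 ^ (-ε * n)`.
-/

open scoped ENNReal

/-! ### Weights of words -/

section Weight

variable {A : Type*} {w : A → ℕ}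

@[simp]
lemma wt_nil (w : A → ℕ) : wt w [] = 0 := rfl

@[simp]
lemma wt_cons (w : A → ℕ) (a : A) (X : List A) : wt w (a :: X) = w a + wt w X := by
  simp [wt]

lemma prod_map_pow_eq_pow_wt {M : Type*} [Monoid M] (x : M) (w : A → ℕ) (X : List A) :
    (X.map fun a => x ^ w a).prod = x ^ wt w X := by
  induction X with
  | nil => simp
  | cons a X ih => simp [ih, pow_add]

lemma length_le_wt (hw : ∀ a, 0 < w a) (X : List A) : X.length ≤ wt w X := by
  induction X with
  | nil => simp
  | cons a X ih =>
    have := hw a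
    simp only [List.length_cons, wt_cons]
    lia

lemma le_wt_of_mem {a : A} {X : List A} (ha : a ∈ X) : w a ≤ wt w X :=
  List.le_sum_of_mem (List.mem_map_of_mem ha)

lemma exists_wt_eq_iff_mem_closure {n : ℕ} :
    (∃ X, wt w X = n) ↔ n ∈ AddSubmonoid.closure (Set.range w) := by
  simp only [← FreeAddMonoid.mrange_lift, AddMonoidHom.mem_mrange, FreeAddMonoid.lift_apply]
  rfl

lemma exists_forall_ge_exists_wt_eq_iff (w : A → ℕ) :
    ∃ n₀, ∀ n ≥ n₀, (∃ X, wt w X = n) ↔ Nat.setGcd (Set.range w) ∣ n := by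
  obtain ⟨n₀, h⟩ := Nat.exists_mem_closure_of_ge (Set.range w)
  refine ⟨n₀, fun n hn => ?_⟩
  rw [exists_wt_eq_iff_mem_closure]
  exact ⟨Nat.setGcd_dvd_of_mem_closure, h n hn⟩

lemma finite_setOf_le_of_summable_pow {x : ℝ} (hx : 0 < x) (hs : Summable fun a => x ^ w a)
    (n : ℕ) : {a | w a ≤ n}.Finite := by
  have hpos : 0 < min 1 x ^ n := by positivity
  have hsmall := hs.tendsto_cofinite_zero.eventually_lt_const hpos
  refine (Filter.eventually_cofinite.1 hsmall).subset fun a ha => not_lt.2 ?_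
  calc min 1 x ^ n ≤ min 1 x ^ w a := pow_le_pow_of_le_one (by positivity) (min_le_left _ _) ha
    _ ≤ x ^ w a := by gcongr; exact min_le_right _ _

lemma finite_setOf_wt_eq (hw : ∀ a, 0 < w a) (hf : ∀ n, {a | w a ≤ n}.Finite) (n : ℕ) :
    {X | wt w X = n}.Finite := by
  have := (hf n).to_subtype
  refine ((List.finite_length_le {a | w a ≤ n} n).image (List.map (↑))).subset ?_
  intro X hX
  obtain ⟨Y, rfl⟩ : X ∈ Set.range (List.map ((↑) : {a | w a ≤ n} → A)) := by
    rw [Set.range_list_map_coe]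
    exact fun a ha => (le_wt_of_mem ha).trans_eq hX
  exact ⟨Y, by simpa using (length_le_wt hw _).trans_eq hX, rfl⟩

end Weight

/-! ### A lower bound for the number of words -/

section WordCount

variable {A : Type*} {w : A → ℕ}

/-- The number of words of weight `n`, with the junk value `0` if there are infinitely many. -/
noncomputable def wordCount (w : A → ℕ) (n : ℕ) : ℕ := {X : List A | wt w X = n}.ncard

lemma wordCount_pos_iff {n : ℕ} (hfin : {X | wt w X = n}.Finite) :
    0 < wordCount w n ↔ ∃ X, wt w X = n :=
  Set.ncard_pos hfin

lemma sum_wordCount_sub_le (hfin : ∀ n, {X | wt w X = n}.Finite) {F : Finset A} {n : ℕ}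
    (hF : ∀ a ∈ F, w a ≤ n) : ∑ a ∈ F, wordCount w (n - w a) ≤ wordCount w n := by
  have hfinite (m : ℕ) : Finite {X | wt w X = m} := (hfin m).to_subtype
  let prepend (s : Σ a : F, {X | wt w X = n - w a}) : {X | wt w X = n} :=
    ⟨s.1 :: s.2, by
      have hX : wt w s.2 = n - w s.1 := s.2.2
      rw [Set.mem_ofPred_eq, wt_cons, hX, Nat.add_sub_cancel' (hF _ s.1.2)]⟩
  have hinj : Function.Injective prepend := by
    rintro ⟨⟨a, _⟩, X, _⟩ ⟨⟨b, _⟩, Y, _⟩ h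
    obtain ⟨rfl, rfl⟩ := List.cons.inj (congrArg Subtype.val h)
    rfl
  calc ∑ a ∈ F, wordCount w (n - w a)
      = ∑ a : F, Nat.card {X | wt w X = n - w a} := (Finset.sum_coe_sort F _).symm
    _ = Nat.card (Σ a : F, {X | wt w X = n - w a}) := Nat.card_sigma.symm
    _ ≤ Nat.card {X | wt w X = n} := Nat.card_le_card_of_injective prepend hinj

lemma le_pow_mul_wordCount_of_forall_mem (hfin : ∀ n, {X | wt w X = n}.Finite)
    {F : Finset A} {z c : ℝ} (hz : 0 ≤ z) (hc : 0 ≤ c) (hF : 1 ≤ ∑ a ∈ F, z ^ w a) {n : ℕ}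
    (hle : ∀ a ∈ F, w a ≤ n) (h : ∀ a ∈ F, c ≤ z ^ (n - w a) * wordCount w (n - w a)) :
    c ≤ z ^ n * wordCount w n := by
  calc c ≤ (∑ a ∈ F, z ^ w a) * c := le_mul_of_one_le_left hc hF
    _ = ∑ a ∈ F, z ^ w a * c := Finset.sum_mul ..
    _ ≤ ∑ a ∈ F, z ^ w a * (z ^ (n - w a) * wordCount w (n - w a)) := by
        gcongr with a ha
        exact h a ha
    _ = z ^ n * ∑ a ∈ F, (wordCount w (n - w a) : ℝ) := by
        rw [Finset.mul_sum]
        refine Finset.sum_congr rfl fun a ha => ?_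
        rw [← mul_assoc, pow_mul_pow_sub z (hle a ha)]
    _ ≤ z ^ n * wordCount w n := by
        gcongr
        exact_mod_cast sum_wordCount_sub_le hfin hle

lemma exists_pos_le_pow_mul_wordCount (hw : ∀ a, 0 < w a) (hfin : ∀ n, {X | wt w X = n}.Finite)
    {F : Finset A} {z : ℝ} (hz : 0 < z) (hF : 1 ≤ ∑ a ∈ F, z ^ w a) :
    ∃ c > 0, ∀ n, (∃ X, wt w X = n) → c ≤ z ^ n * wordCount w n := by
  obtain ⟨n₀, hn₀⟩ := exists_forall_ge_exists_wt_eq_iff w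
  let base : Set ℕ := {n | n ≤ n₀ + F.sup w ∧ ∃ X, wt w X = n}
  have hbase : base.Finite := (Set.finite_Iic _).subset fun n hn => hn.1
  obtain ⟨m, hm, hmin⟩ := base.exists_min_image (fun n => z ^ n * wordCount w n) hbase
    ⟨0, Nat.zero_le _, [], wt_nil w⟩
  have hpos : 0 < z ^ m * (wordCount w m : ℝ) := by
    have := (wordCount_pos_iff (hfin m)).2 hm.2
    positivity
  refine ⟨_, hpos, fun n => ?_⟩
  induction n using Nat.strong_induction_on with
  | _ n ih =>
    intro hn
    obtain hsmall | hlarge := le_or_gt n (n₀ + F.sup w)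
    · exact hmin n ⟨hsmall, hn⟩
    have hle : ∀ a ∈ F, w a ≤ F.sup w := fun a => Finset.le_sup
    refine le_pow_mul_wordCount_of_forall_mem hfin hz.le hpos.le hF
      (fun a ha => by linarith [hle a ha]) fun a ha => ?_
    have ha_le := hle a ha
    refine ih (n - w a) (by have := hw a; lia) ((hn₀ _ (by lia)).2 ?_)
    exact Nat.dvd_sub ((hn₀ n (by lia)).1 hn) (Nat.setGcd_dvd_of_mem ⟨a, rfl⟩)

end WordCount

/-! ### The letter generating function near its critical point -/

section LetterSeries

variable {A : Type*} {w : A → ℕ}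

/-- The generating function `A(x) = ∑ a, x ^ w a` of the letters, with the junk value `0` where the
series diverges. -/
noncomputable def letterSeries (w : A → ℕ) (x : ℝ) : ℝ := ∑' a, x ^ w a

lemma summable_pow_of_le {x y : ℝ} (hx : 0 ≤ x) (hxy : x ≤ y) (hs : Summable fun a => y ^ w a) :
    Summable fun a => x ^ w a :=
  hs.of_nonneg_of_le (fun _ => by positivity) fun _ => by gcongr

lemma continuousOn_letterSeries {y : ℝ} (hs : Summable fun a => y ^ w a) :
    ContinuousOn (letterSeries w) (Set.Icc 0 y) := by
  refine continuousOn_tsum (fun a => by fun_prop) hs fun a t ht => ?_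
  rw [Real.norm_of_nonneg (pow_nonneg ht.1 _)]
  exact pow_le_pow_left₀ ht.1 ht.2 _

lemma letterSeries_zero (hw : ∀ a, 0 < w a) : letterSeries w 0 = 0 := by
  simp [letterSeries, (hw _).ne']

lemma exists_letterSeries_eq_one (hw : ∀ a, 0 < w a) {y : ℝ} (hy : 0 ≤ y)
    (hs : Summable fun a => y ^ w a) (h1 : 1 < letterSeries w y) :
    ∃ κ ∈ Set.Ioo 0 y, letterSeries w κ = 1 := by
  refine intermediate_value_Ioo hy (continuousOn_letterSeries hs) ⟨?_, h1⟩
  rw [letterSeries_zero hw]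
  exact one_pos

lemma exists_letterSeries_pow_lt {κ y : ℝ} (hκ : κ ∈ Set.Ioo 0 y) (hs : Summable fun a => y ^ w a)
    (h1 : letterSeries w κ = 1) (k m : ℕ) :
    ∃ x ∈ Set.Ioo κ y, letterSeries w x ^ k < 1 + x ^ m / 2 := by
  have hcont : ContinuousAt (letterSeries w) κ :=
    (continuousOn_letterSeries hs).continuousAt (Icc_mem_nhds hκ.1 hκ.2)
  have hlt : letterSeries w κ ^ k < 1 + κ ^ m / 2 := by
    have := hκ.1
    rw [h1, one_pow, lt_add_iff_pos_right]
    positivity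
  have hev : ∀ᶠ x in nhds κ, letterSeries w x ^ k < 1 + x ^ m / 2 :=
    (hcont.pow k).eventually_lt (by fun_prop) hlt
  exact (Filter.Eventually.and (Ioo_mem_nhdsGT hκ.2) (hev.filter_mono nhdsWithin_le_nhds)).exists

lemma exists_one_le_sum_pow (hw : ∀ a, 0 < w a) {κ z : ℝ} (hκ : 0 ≤ κ) (hκz : κ < z)
    (hs : Summable fun a => z ^ w a) (h1 : letterSeries w κ = 1) :
    ∃ F : Finset A, 1 ≤ ∑ a ∈ F, z ^ w a := by
  have : Nonempty A := by
    by_contra! hA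
    simp [letterSeries] at h1
  have hz : 1 < letterSeries w z := h1 ▸ Summable.tsum_lt_tsum (i := Classical.arbitrary A)
    (fun a => by gcongr) (pow_lt_pow_left₀ hκz hκ (hw _).ne')
    (summable_pow_of_le hκ hκz.le hs) hs
  obtain ⟨F, hF⟩ := (hs.hasSum.eventually_const_lt hz).exists
  exact ⟨F, hF.le⟩

end LetterSeries

/-! ### Disjoint blocks -/

namespace HasDisjointBlocks

variable {A : Type*} {P X : List A} {m : ℕ}

lemma nil_left (X : List A) (m : ℕ) : HasDisjointBlocks [] X m :=
  ⟨fun _ => 0, by simp, by simp⟩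

lemma zero (P X : List A) : HasDisjointBlocks P X 0 :=
  ⟨fun _ => 0, by simp, by simp⟩

lemma append_left (Y : List A) (h : HasDisjointBlocks P X m) : HasDisjointBlocks P (Y ++ X) m := by
  obtain ⟨g, hblock, hgap⟩ := h
  refine ⟨fun i => Y.length + g i, fun i hi => ?_, fun i hi => ?_⟩
  · rw [← List.drop_drop, List.drop_left, hblock i hi]
  · have := hgap i hi
    lia

lemma block_append (h : HasDisjointBlocks P X m) : HasDisjointBlocks P (P ++ X) (m + 1) := by
  obtain ⟨g, hblock, hgap⟩ := h
  refine ⟨fun | 0 => 0 | i + 1 => P.length + g i, ?_, ?_⟩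
  · rintro (_ | i) hi
    · simp
    · rw [← List.drop_drop, List.drop_left, hblock i (by lia)]
  · rintro (_ | i) hi
    · simp
    · have := hgap i (by lia)
      lia

end HasDisjointBlocks

/-! ### Cutting words into chunks -/

/-- A word cut into consecutive chunks of length `k`, followed by a remainder shorter than `k`. -/
abbrev ChunkedWord (A : Type*) (k : ℕ) : Type _ := List (Fin k → A) × Σ j : Fin k, Fin j → A

namespace ChunkedWord

variable {A : Type*} {k : ℕ}

/-- The word that has been cut into chunks. -/
def join (q : ChunkedWord A k) : List A := (q.1.map List.ofFn).flatten ++ List.ofFn q.2.2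

@[simp]
lemma join_nil (r : Σ j : Fin k, Fin j → A) : join ([], r) = List.ofFn r.2 := by
  simp [join]

@[simp]
lemma join_cons (f : Fin k → A) (fs : List (Fin k → A)) (r : Σ j : Fin k, Fin j → A) :
    join (f :: fs, r) = List.ofFn f ++ join (fs, r) := by
  simp [join]

lemma join_surjective (hk : 0 < k) : Function.Surjective (join : ChunkedWord A k → List A) := by
  intro X
  induction h : X.length using Nat.strong_induction_on generalizing X with
  | _ n ih =>
    obtain hlt | hle := lt_or_ge X.length k
    · exact ⟨([], ⟨⟨X.length, hlt⟩, X.get⟩), by simp⟩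
    · obtain ⟨⟨fs, r⟩, hq⟩ := ih (X.drop k).length (by grind) (X.drop k) rfl
      have htake := Fin.ofFn_take_get X hle
      refine ⟨(Fin.take k hle X.get :: fs, r), ?_⟩
      rw [join_cons, hq, htake, List.take_append_drop]

lemma hasDisjointBlocks_join [DecidableEq A] (P : List A) (q : ChunkedWord A P.length) :
    HasDisjointBlocks P q.join (q.1.count P.get) := by
  obtain ⟨fs, r⟩ := q
  induction fs with
  | nil => exact .zero P _
  | cons f fs ih =>
    rw [join_cons]
    obtain rfl | hf := eq_or_ne f P.get
    · rw [List.ofFn_get, List.count_cons_self]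
      exact ih.block_append
    · rw [List.count_cons_of_ne hf]
      exact ih.append_left _

lemma prod_map_join_mul_pow_count [DecidableEq A] {M : Type*} [CommMonoid M] (v : A → M) (θ : M)
    (p : Fin k → A) (q : ChunkedWord A k) :
    (q.join.map v).prod * θ ^ q.1.count p =
      (q.1.map fun f => (∏ i, v (f i)) * if f = p then θ else 1).prod * ∏ i, v (q.2.2 i) := by
  obtain ⟨fs, r⟩ := q
  induction fs with
  | nil => simp [List.map_ofFn, List.prod_ofFn]
  | cons f fs ih =>
    rw [join_cons, List.map_append, List.prod_append, List.map_ofFn, List.prod_ofFn,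
      List.map_cons, List.prod_cons, mul_assoc _ _ (∏ i, v (r.2 i)), ← ih]
    obtain rfl | hf := eq_or_ne f p
    · rw [List.count_cons_self, if_pos rfl, pow_succ']
      simp only [Function.comp_apply]
      ac_rfl
    · rw [List.count_cons_of_ne hf, if_neg hf]
      simp only [Function.comp_apply, mul_one, mul_assoc]

end ChunkedWord

/-! ### The damped generating function of the words -/

section Damped

lemma tsum_pi_prod {α : Type*} (v : α → ℝ≥0∞) (n : ℕ) :
    ∑' f : Fin n → α, ∏ i, v (f i) = (∑' a, v a) ^ n := by
  induction n with
  | zero => simp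
  | succ n ih =>
    rw [← (Fin.consEquiv fun _ => α).tsum_eq, ENNReal.tsum_prod', pow_succ', ← ih]
    simp only [Fin.consEquiv_apply, Fin.prod_univ_succ, Fin.cons_zero, Fin.cons_succ,
      ENNReal.tsum_mul_left, ENNReal.tsum_mul_right]

lemma tsum_list_prod {α : Type*} (v : α → ℝ≥0∞) :
    ∑' X : List α, (X.map v).prod = (1 - ∑' a, v a)⁻¹ := by
  rw [← List.equivSigmaTuple.symm.tsum_eq, ENNReal.tsum_sigma', ← ENNReal.tsum_geometric]
  refine tsum_congr fun n => ?_
  simp [List.equivSigmaTuple, List.map_ofFn, List.prod_ofFn, ← tsum_pi_prod]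

variable {A : Type*}

lemma tsum_chunkedWord {k : ℕ} (u : (Fin k → A) → ℝ≥0∞) (v : A → ℝ≥0∞) :
    ∑' q : ChunkedWord A k, (q.1.map u).prod * ∏ i, v (q.2.2 i) =
      (1 - ∑' f, u f)⁻¹ * ∑ j : Fin k, (∑' a, v a) ^ (j : ℕ) := by
  rw [ENNReal.tsum_prod']
  simp only [ENNReal.tsum_mul_left, ENNReal.tsum_mul_right, tsum_list_prod, ENNReal.tsum_sigma',
    tsum_fintype, tsum_pi_prod]

lemma tsum_damped_add [DecidableEq A] {k : ℕ} (v : A → ℝ≥0∞) (p : Fin k → A) :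
    (∑' f : Fin k → A, (∏ i, v (f i)) * if f = p then 2⁻¹ else 1) + 2⁻¹ * ∏ i, v (p i) =
      (∑' a, v a) ^ k := by
  rw [← tsum_pi_prod, ← tsum_ite_eq p fun f => 2⁻¹ * ∏ i, v (f i), ← ENNReal.tsum_add]
  refine tsum_congr fun f => ?_
  obtain rfl | hf := eq_or_ne f p
  · rw [if_pos rfl, if_pos rfl, mul_comm, ← add_mul, ENNReal.inv_two_add_inv_two, one_mul]
  · rw [if_neg hf, if_neg hf, mul_one, add_zero]

lemma exists_tsum_damped_ne_top {P : List A} (hP : P ≠ []) {v : A → ℝ≥0∞}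
    (hv : (∑' a, v a) ^ P.length < 1 + 2⁻¹ * (P.map v).prod) :
    ∃ b : List A → ℕ, (∀ X, HasDisjointBlocks P X (b X)) ∧
      ∑' X, (X.map v).prod * 2⁻¹ ^ b X ≠ ∞ := by
  classical
  have hlen : 0 < P.length := List.length_pos_iff.2 hP
  obtain ⟨cut, hcut⟩ := (ChunkedWord.join_surjective (A := A) hlen).hasRightInverse
  refine ⟨fun X => (cut X).1.count P.get, fun X => ?_, ?_⟩
  · simpa only [hcut X] using ChunkedWord.hasDisjointBlocks_join P (cut X)
  have hfin : ∑' a, v a ≠ ∞ := by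
    simpa [hlen.ne'] using hv.ne_top
  have hratio : ∑' f : Fin P.length → A, (∏ i, v (f i)) * (if f = P.get then 2⁻¹ else 1) < 1 := by
    have hprod : ∏ i, v (P.get i) = (P.map v).prod := by
      rw [← List.prod_ofFn, ← Function.comp_def, ← List.map_ofFn, List.ofFn_get]
    rw [← tsum_damped_add v P.get, hprod] at hv
    exact lt_of_add_lt_add_right hv
  refine ne_top_of_le_ne_top (b := ∑' q : ChunkedWord A P.length,
    (q.join.map v).prod * 2⁻¹ ^ q.1.count P.get) ?_ ?_
  · simp only [ChunkedWord.prod_map_join_mul_pow_count, tsum_chunkedWord]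
    refine ENNReal.mul_ne_top ?_ (ENNReal.sum_ne_top.2 fun j _ => ENNReal.pow_ne_top hfin)
    exact ENNReal.inv_ne_top.2 (tsub_pos_of_lt hratio).ne'
  · calc ∑' X, (X.map v).prod * 2⁻¹ ^ (cut X).1.count P.get
        = ∑' X, ((cut X).join.map v).prod * 2⁻¹ ^ (cut X).1.count P.get := by simp only [hcut _]
      _ ≤ _ := ENNReal.tsum_comp_le_tsum_of_injective hcut.injective _

lemma exists_summable_damped {w : A → ℕ} {P : List A} (hP : P ≠ []) {x : ℝ} (hx : 0 ≤ x)
    (hs : Summable fun a => x ^ w a) (hlt : letterSeries w x ^ P.length < 1 + x ^ wt w P / 2) :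
    ∃ b : List A → ℕ, (∀ X, HasDisjointBlocks P X (b X)) ∧
      Summable fun X => x ^ wt w X * 2⁻¹ ^ b X := by
  have hprod (X : List A) :
      (X.map fun a => ENNReal.ofReal x ^ w a).prod = ENNReal.ofReal x ^ wt w X :=
    prod_map_pow_eq_pow_wt _ w X
  have hA : ∑' a, ENNReal.ofReal x ^ w a = ENNReal.ofReal (letterSeries w x) := by
    simp only [← ENNReal.ofReal_pow hx]
    exact (ENNReal.ofReal_tsum_of_nonneg (fun a => by positivity) hs).symm
  have hlt' : (∑' a, ENNReal.ofReal x ^ w a) ^ P.length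
      < 1 + 2⁻¹ * (P.map fun a => ENNReal.ofReal x ^ w a).prod := by
    have hA0 : 0 ≤ letterSeries w x := tsum_nonneg fun a => by positivity
    have hrhs : 1 + 2⁻¹ * ENNReal.ofReal x ^ wt w P = ENNReal.ofReal (1 + x ^ wt w P / 2) := by
      rw [ENNReal.ofReal_add one_pos.le (by positivity), ENNReal.ofReal_div_of_pos two_pos,
        ENNReal.ofReal_pow hx, ENNReal.ofReal_one, ENNReal.ofReal_ofNat, div_eq_mul_inv, mul_comm]
    rw [hA, hprod, hrhs, ← ENNReal.ofReal_pow hA0]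
    exact (ENNReal.ofReal_lt_ofReal_iff (by positivity)).2 hlt
  obtain ⟨b, hb, hsum⟩ := exists_tsum_damped_ne_top hP hlt'
  refine ⟨b, hb, ?_⟩
  simpa [hprod, hx] using ENNReal.summable_toReal hsum

end Damped

/-! ### Comparing the two bounds -/

section Tail

variable {A : Type*} {w : A → ℕ}

lemma ncard_mul_le_tsum {α : Type*} {f : α → ℝ} (hf : ∀ i, 0 ≤ f i) (hs : Summable f) {S : Set α}
    {r : ℝ} (hr : ∀ i ∈ S, r ≤ f i) : S.ncard * r ≤ ∑' i, f i := by
  obtain hS | hS := S.finite_or_infinite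
  · rw [Set.ncard_eq_toFinset_card S hS, ← nsmul_eq_mul]
    calc _ ≤ ∑ i ∈ hS.toFinset, f i :=
          Finset.card_nsmul_le_sum _ _ _ fun i hi => hr i (hS.mem_toFinset.1 hi)
      _ ≤ ∑' i, f i := hs.sum_le_tsum _ fun i _ => hf i
  · simpa [hS.ncard] using tsum_nonneg hf

lemma two_rpow_neg_le_inv_two_pow {b : ℕ} {t : ℝ} (h : (b : ℝ) ≤ t) :
    (2 : ℝ) ^ (-t) ≤ 2⁻¹ ^ b := by
  rw [inv_pow, ← Real.rpow_natCast, ← Real.rpow_neg two_pos.le]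
  exact Real.rpow_le_rpow_of_exponent_le one_le_two (neg_le_neg h)

lemma ncard_mul_le_tsum_damped {b : List A → ℕ} {x : ℝ} (hx : 0 ≤ x)
    (hs : Summable fun X => x ^ wt w X * 2⁻¹ ^ b X) (n : ℕ) (t : ℝ) :
    {X | wt w X = n ∧ (b X : ℝ) < t}.ncard * (x ^ n * 2 ^ (-t)) ≤
      ∑' X, x ^ wt w X * 2⁻¹ ^ b X := by
  refine ncard_mul_le_tsum (fun X => by positivity) hs ?_
  rintro X ⟨rfl, hb⟩
  gcongr
  exact two_rpow_neg_le_inv_two_pow hb.le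

lemma exists_eq_mul_two_rpow {z x : ℝ} (hz : 0 < z) (hzx : z < x) :
    ∃ ε : ℝ, 0 < ε ∧ x = z * 2 ^ (2 * ε) := by
  have hlog : 0 < Real.logb 2 (x / z) := Real.logb_pos one_lt_two ((one_lt_div hz).2 hzx)
  refine ⟨Real.logb 2 (x / z) / 2, half_pos hlog, ?_⟩
  rw [mul_div_cancel₀ _ two_ne_zero, Real.rpow_logb two_pos (by norm_num)
    (div_pos (hz.trans hzx) hz), mul_div_cancel₀ _ hz.ne']

lemma le_div_mul_two_rpow_mul {B G N c z ε : ℝ} {n : ℕ} (hz : 0 < z) (hc : 0 < c) (hG : 0 ≤ G)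
    (hB : B * ((z * 2 ^ (2 * ε)) ^ n * 2 ^ (-(ε * n))) ≤ G) (hN : c ≤ z ^ n * N) :
    B ≤ G / c * 2 ^ (-ε * n) * N := by
  have hpow : ((2 : ℝ) ^ (2 * ε)) ^ n * 2 ^ (-(ε * n)) = 2 ^ (ε * n) := by
    rw [← Real.rpow_natCast, ← Real.rpow_mul two_pos.le, ← Real.rpow_add two_pos]
    ring_nf
  rw [mul_pow, mul_assoc, hpow] at hB
  rw [neg_mul, Real.rpow_neg two_pos.le]
  calc B ≤ G / (z ^ n * 2 ^ (ε * n)) := (le_div_iff₀ (by positivity)).2 hB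
    _ = G / c * (2 ^ (ε * n))⁻¹ * (c / z ^ n) := by field_simp
    _ ≤ G / c * (2 ^ (ε * n))⁻¹ * N := by
        gcongr
        exact (div_le_iff₀' (by positivity)).2 hN

lemma exists_supercritical_damping (hw : ∀ a, 0 < w a) {y : ℝ} (hy : 0 ≤ y)
    (hs : Summable fun a => y ^ w a) (h1 : 1 < letterSeries w y) {P : List A} (hP : P ≠ []) :
    ∃ z ε : ℝ, 0 < z ∧ 0 < ε ∧ (∃ F : Finset A, 1 ≤ ∑ a ∈ F, z ^ w a) ∧
      ∃ b : List A → ℕ, (∀ X, HasDisjointBlocks P X (b X)) ∧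
        Summable fun X => (z * 2 ^ (2 * ε)) ^ wt w X * 2⁻¹ ^ b X := by
  obtain ⟨κ, hκ, hκ1⟩ := exists_letterSeries_eq_one hw hy hs h1
  obtain ⟨x, ⟨hκx, hxy⟩, hx⟩ := exists_letterSeries_pow_lt hκ hs hκ1 P.length (wt w P)
  obtain ⟨z, hκz, hzx⟩ := exists_between hκx
  have hz : 0 < z := hκ.1.trans hκz
  have hx0 : 0 ≤ x := hz.le.trans hzx.le
  have hsx := summable_pow_of_le hx0 hxy.le hs
  have hsz := summable_pow_of_le hz.le hzx.le hsx
  obtain ⟨ε, hε, rfl⟩ := exists_eq_mul_two_rpow hz hzx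
  exact ⟨z, ε, hz, hε, exists_one_le_sum_pow hw hκ.1.le hκz hsz hκ1,
    exists_summable_damped hP hx0 hsx hx⟩

end Tail

theorem random_word_disjoint_blocks_general {A : Type*} (w : A → ℕ) (hw : ∀ a, 0 < w a)
    (hsuper : ∃ x : ℝ, 0 < x ∧ Summable (fun a : A => x ^ w a) ∧ 1 < ∑' a : A, x ^ w a)
    (P : List A) :
    ∃ ε : ℝ, 0 < ε ∧ ∃ c δ : ℝ, 0 < c ∧ 0 < δ ∧ ∀ n : ℕ,
      (Set.ncard {X : List A | wt w X = n ∧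
          ¬ ∃ m : ℕ, ε * n ≤ (m : ℝ) ∧ HasDisjointBlocks P X m} : ℝ)
        ≤ c * 2 ^ (-δ * (n : ℝ)) * (Set.ncard {X : List A | wt w X = n} : ℝ) := by
  obtain rfl | hP := eq_or_ne P []
  · have hempty (n : ℕ) : {X | wt w X = n ∧
        ¬ ∃ m : ℕ, (1 : ℝ) * n ≤ m ∧ HasDisjointBlocks [] X m} = ∅ :=
      Set.eq_empty_of_forall_notMem fun X hX =>
        hX.2 ⟨n, (one_mul _).le, HasDisjointBlocks.nil_left X n⟩
    refine ⟨1, one_pos, 1, 1, one_pos, one_pos, fun n => ?_⟩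
    rw [hempty, Set.ncard_empty, Nat.cast_zero]
    positivity
  obtain ⟨y, hy, hs, h1⟩ := hsuper
  have hfin := finite_setOf_wt_eq hw (finite_setOf_le_of_summable_pow hy hs)
  obtain ⟨z, ε, hz, hε, ⟨F, hF⟩, b, hb, hsum⟩ := exists_supercritical_damping hw hy.le hs h1 hP
  obtain ⟨c, hc, hcount⟩ := exists_pos_le_pow_mul_wordCount hw hfin hz hF
  have hG := hsum.tsum_pos (fun X => by positivity) [] (by positivity)
  refine ⟨ε, hε, _, ε, div_pos hG hc, hε, fun n => ?_⟩
  obtain hbad | ⟨X, hX⟩ := Set.eq_empty_or_nonempty {X | wt w X = n ∧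
    ¬ ∃ m : ℕ, ε * n ≤ m ∧ HasDisjointBlocks P X m}
  · rw [hbad, Set.ncard_empty, Nat.cast_zero]
    positivity
  refine le_trans ?_ (le_div_mul_two_rpow_mul hz hc hG.le
    (ncard_mul_le_tsum_damped (by positivity) hsum n (ε * n)) (hcount n ⟨X, hX.1⟩))
  gcongr
  · exact (hfin n).subset fun Y hY => hY.1
  · exact fun hfew => not_le.1 fun hle => hfew ⟨b _, hle, hb _⟩

/-- **Proposition `pro-occur`.**  Let `A` be an alphabet with positive integer letter
weights such that `A*` is aperiodic (the gcd of the letter weights is `1`) and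
supercritical (`A(x) = Σ_a x^{weight a}` exceeds `1` somewhere inside its disc of
convergence).  Then for every word `P ∈ A*` there is `ε = ε_P > 0` such that with
probability at least `1 − 2^{−Ω(n)}`, a uniformly random word `X ∈ A*` of weight `n`
contains at least `ε·n` pairwise disjoint `P`-blocks.  (Stated by counting: the number
of weight-`n` words failing this is at most `c·2^{−δn}` times the number of all
weight-`n` words, for some constants `c, δ > 0`.) -/
theorem random_word_disjoint_blocks {A : Type*} (w : A → ℕ) (hw : ∀ a, 0 < w a)
    (hsuper : ∃ x : ℝ, 0 < x ∧ Summable (fun a : A => x ^ w a) ∧ 1 < ∑' a : A, x ^ w a)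
    (haper : ∀ d : ℕ, (∀ a : A, d ∣ w a) → d = 1)
    (P : List A) :
    ∃ ε : ℝ, 0 < ε ∧ ∃ c δ : ℝ, 0 < c ∧ 0 < δ ∧ ∀ n : ℕ,
      (Set.ncard {X : List A | wt w X = n ∧
          ¬ ∃ m : ℕ, ε * n ≤ (m : ℝ) ∧ HasDisjointBlocks P X m} : ℝ)
        ≤ c * 2 ^ (-δ * (n : ℝ)) * (Set.ncard {X : List A | wt w X = n} : ℝ) :=
  random_word_disjoint_blocks_general w hw hsuper P
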